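/- Let X be a set, let f_k : X → ℝ be a sequence of real-valued functions, and let r ≥ 0 be a real number. If (f_k) is pointwise rough statistically Cauchy on X with roughness degree r, then there exist a function f : X → ℝ and a sequence of functions g_k : X → ℝ such that: (1) for every x ∈ X, the set {k ∈ ℕ : f_k(x) ≠ g_k(x)} has natural density 0, and (2) (g_k) is pointwise rough convergent (in the ordinary sense) to f on X with roughness degree 2r, i.e., for every x ∈ X and every ε > 0 there exists N ∈ ℕ such that |g_k(x) − f(x)| < 2r + ε for all k ≥ N. -/

import Mathlib

open scoped Classical

/-- The set `A ⊆ ℕ` has natural density `d`. -/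
def natDensity (A : Set ℕ) (d : ℝ) : Prop :=
  Filter.Tendsto
    (fun n => (((Finset.range n).filter (fun k => k ∈ A)).card : ℝ) / (n : ℝ))
    Filter.atTop (nhds d)

/-!
Rough statistical Cauchyness supplies, for each `n`, a term `c n` of the sequence at distance less
than `r + 1 / (n + 1)` from almost all terms, in the sense of density. Two sets of density one meet,
so the `c n` are bounded, and any cluster point `y` of them is a rough statistical limit, with the
same degree `r`: the factor `2` is not needed. To pass from statistical to ordinary convergence,
let the tolerance shrink along the sequence, so slowly that the terms violating it still form a set
of density zero, and replace exactly those terms.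
-/

open Filter Topology Set

theorem natDensity_empty : natDensity ∅ 0 := by
  simp [natDensity]

theorem natDensity.mono_zero {A B : Set ℕ} (hB : natDensity B 0) (h : A ⊆ B) :
    natDensity A 0 := by
  refine squeeze_zero (fun n => by positivity) (fun n => ?_) hB
  gcongr

theorem natDensity.union_zero {A B : Set ℕ} (hA : natDensity A 0) (hB : natDensity B 0) :
    natDensity (A ∪ B) 0 := by
  refine squeeze_zero (fun n => by positivity) (fun n => ?_) (by simpa using Tendsto.add hA hB)
  rw [← add_div]
  gcongr
  simp only [mem_union, Finset.filter_or]
  exact_mod_cast Finset.card_union_le _ _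

theorem not_natDensity_univ_zero : ¬ natDensity univ 0 := by
  intro h
  have h_one : natDensity univ 1 := by
    refine tendsto_const_nhds.congr' ?_
    filter_upwards [eventually_ne_atTop 0] with n hn
    simp [hn]
  exact zero_ne_one (tendsto_nhds_unique h h_one)

/-- The filter of subsets of `ℕ` whose complement has natural density zero; convergence along it is
statistical convergence. -/
def densityOne : Filter ℕ :=
  comk (natDensity · 0) natDensity_empty (fun _ ht _ h => ht.mono_zero h)
    fun _ hs _ ht => hs.union_zero ht

theorem mem_densityOne {s : Set ℕ} : s ∈ densityOne ↔ natDensity sᶜ 0 :=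
  Iff.rfl

instance : densityOne.NeBot :=
  ⟨fun h => not_natDensity_univ_zero (by simpa [h] using (mem_densityOne (s := ∅)).1)⟩

theorem exists_monotone_tendsto_atTop_eventually_diagonal {P : ℕ → ℕ → Prop}
    (h : ∀ m, ∀ᶠ n in atTop, P m n) :
    ∃ p : ℕ → ℕ, Monotone p ∧ Tendsto p atTop atTop ∧ ∀ᶠ n in atTop, P (p n) n := by
  obtain ⟨N, hN_mono, hN⟩ :=
    extraction_forall_of_eventually fun m => eventually_forall_ge_atTop.2 (h m)
  let p : ℕ → ℕ := fun n => Nat.findGreatest (fun m => N m ≤ n) n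
  have le_p {m n : ℕ} (hmn : N m ≤ n) : m ≤ p n :=
    Nat.le_findGreatest (hN_mono.le_apply.trans hmn) hmn
  refine ⟨p, fun a b hab => Nat.findGreatest_mono (fun m hm => le_trans hm hab) hab, ?_, ?_⟩
  · refine tendsto_atTop.2 fun m => ?_
    filter_upwards [eventually_ge_atTop (N m)] with n hn using le_p hn
  · filter_upwards [eventually_ge_atTop (N 0)] with n hn
    have h_spec : N (p n) ≤ n := Nat.findGreatest_spec (P := fun m => N m ≤ n) (Nat.zero_le n) hn
    exact hN (p n) n h_spec

theorem exists_natDensity_diagonal_zero {A : ℕ → Set ℕ} (hA_mono : Monotone A)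
    (hA : ∀ m, natDensity (A m) 0) :
    ∃ p : ℕ → ℕ, Monotone p ∧ Tendsto p atTop atTop ∧ natDensity {k | k ∈ A (p k)} 0 := by
  obtain ⟨p, hp_mono, hp_top, hp⟩ := exists_monotone_tendsto_atTop_eventually_diagonal fun m =>
    (hA m).eventually_le_const (Nat.one_div_pos_of_nat (α := ℝ) (n := m))
  refine ⟨p, hp_mono, hp_top, squeeze_zero' (.of_forall fun n => by positivity) ?_
    (tendsto_one_div_add_atTop_nhds_zero_nat.comp hp_top)⟩
  filter_upwards [hp] with n hn
  refine le_trans ?_ hn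
  gcongr with k hk
  exact hA_mono (hp_mono (Finset.mem_range.1 hk).le)

theorem exists_eventuallyEq_densityOne_tendsto_atTop {α : Type*} {l : Filter α}
    [l.IsCountablyGenerated] {u : ℕ → α} (hu : Tendsto u densityOne l) :
    ∃ v : ℕ → α, u =ᶠ[densityOne] v ∧ Tendsto v atTop l := by
  have : l.NeBot := hu.neBot
  obtain ⟨B, hB⟩ := l.exists_antitone_basis
  obtain ⟨p, hp_mono, hp_top, hp⟩ := exists_natDensity_diagonal_zero
    (A := fun m => (u ⁻¹' B m)ᶜ)
    (fun m n hmn => compl_subset_compl.2 (preimage_mono (hB.antitone hmn)))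
    (fun m => mem_densityOne.1 (hu (hB.mem m)))
  choose c hc using fun m => Filter.nonempty_of_mem (hB.mem m)
  refine ⟨fun k => if u k ∈ B (p k) then u k else c (p k), ?_, ?_⟩
  · have hu_mem : ∀ᶠ k in densityOne, u k ∈ B (p k) := hp
    filter_upwards [hu_mem] with k hk
    rw [if_pos hk]
  · refine (hB.comp_mono hp_mono hp_top).tendsto fun k => ?_
    dsimp only [Function.comp_apply]
    split_ifs with hk
    exacts [hk, hc (p k)]

section Rough

variable {ι Y : Type*} [PseudoMetricSpace Y] {φ : Filter ι} {u : ι → Y} {r : ℝ}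

/-- The filter generated by the balls of radius greater than `r` about `y`; a function tends to it
exactly when it converges to `y` with roughness degree `r`. -/
def roughNhds (r : ℝ) (y : Y) : Filter Y :=
  comap (dist · y) (𝓝ˢ (Iic r))

instance (y : Y) : (roughNhds r y).IsCountablyGenerated := by
  rw [roughNhds, nhdsSet_Iic]
  infer_instance

theorem tendsto_roughNhds {y : Y} :
    Tendsto u φ (roughNhds r y) ↔ ∀ ε > 0, ∀ᶠ i in φ, dist (u i) y < r + ε := by
  rw [roughNhds, tendsto_comap_iff, (hasBasis_nhdsSet_Iic_Iio r).tendsto_right_iff]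
  refine ⟨fun h ε hε => h (r + ε) (lt_add_of_pos_right r hε), fun h b hb => ?_⟩
  simpa using h (b - r) (sub_pos.2 hb)

theorem exists_tendsto_roughNhds [ProperSpace Y] [φ.NeBot]
    (h : ∀ ε > 0, ∃ c : Y, ∀ᶠ i in φ, dist (u i) c < r + ε) :
    ∃ y, Tendsto u φ (roughNhds r y) := by
  choose c hc using fun n : ℕ => h (1 / (n + 1)) Nat.one_div_pos_of_nat
  have h_near (n : ℕ) : c n ∈ Metric.closedBall (c 0) ((r + 1) + (r + 1)) := by
    obtain ⟨i, hi_n, hi_zero⟩ := ((hc n).and (hc 0)).exists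
    have h_le : 1 / ((n : ℝ) + 1) ≤ 1 := div_le_self zero_le_one (by simp)
    rw [Metric.mem_closedBall]
    simp only [Nat.cast_zero, zero_add, div_one] at hi_zero
    linarith [dist_triangle_left (c n) (c 0) (u i)]
  obtain ⟨y, -, ψ, hψ_mono, hψ⟩ := tendsto_subseq_of_bounded Metric.isBounded_closedBall h_near
  refine ⟨y, tendsto_roughNhds.2 fun ε hε => ?_⟩
  have h_total : Tendsto (fun n => 1 / ((ψ n : ℝ) + 1) + dist (c (ψ n)) y) atTop (𝓝 0) := by
    simpa using (tendsto_one_div_add_atTop_nhds_zero_nat.comp hψ_mono.tendsto_atTop).add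
      (tendsto_iff_dist_tendsto_zero.1 hψ)
  obtain ⟨n, hn⟩ := (h_total.eventually_lt_const hε).exists
  filter_upwards [hc (ψ n)] with i hi
  linarith [dist_triangle (u i) (c (ψ n)) y]

end Rough

theorem stmt_5_general {X Y : Type*} [PseudoMetricSpace Y] [ProperSpace Y] (f : ℕ → X → Y) (r : ℝ)
    (hf : ∀ x : X, ∀ ε > (0 : ℝ),
      ∃ N : ℕ, natDensity {k : ℕ | r + ε ≤ dist (f k x) (f N x)} 0) :
    ∃ (F : X → Y) (g : ℕ → X → Y),
      (∀ x : X, natDensity {k : ℕ | f k x ≠ g k x} 0) ∧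
      (∀ x : X, ∀ ε > (0 : ℝ), ∃ N : ℕ, ∀ k ≥ N, dist (g k x) (F x) < r + ε) := by
  have h_limit (x : X) : ∃ y, Tendsto (f · x) densityOne (roughNhds r y) := by
    refine exists_tendsto_roughNhds fun ε hε => ?_
    obtain ⟨N, hN⟩ := hf x ε hε
    exact ⟨f N x, mem_densityOne.2 (by simpa only [compl_ofPred, not_lt] using hN)⟩
  choose F hF using h_limit
  choose g hfg hg using fun x => exists_eventuallyEq_densityOne_tendsto_atTop (hF x)
  exact ⟨F, fun k x => g x k, hfg,
    fun x ε hε => eventually_atTop.1 (tendsto_roughNhds.1 (hg x) ε hε)⟩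

theorem stmt_5 {X : Type*} (f : ℕ → X → ℝ) (r : ℝ) (hr : 0 ≤ r)
    (hf : ∀ x : X, ∀ ε > (0 : ℝ),
      ∃ N : ℕ, natDensity {k : ℕ | r + ε ≤ |f k x - f N x|} 0) :
    ∃ (F : X → ℝ) (g : ℕ → X → ℝ),
      (∀ x : X, natDensity {k : ℕ | f k x ≠ g k x} 0) ∧
      (∀ x : X, ∀ ε > (0 : ℝ), ∃ N : ℕ, ∀ k ≥ N, |g k x - F x| < 2 * r + ε) := by
  obtain ⟨F, g, hfg, hg⟩ := stmt_5_general f r hf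
  exact ⟨F, g, hfg, fun x ε hε => (hg x ε hε).imp fun N hN k hk => (hN k hk).trans_le (by linarith)⟩
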